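/- Let q be a probability density on ℝ^n with q(x) > 0 for all x, let π̄₁ : ℝ^n → ℝ be measurable with π̄₁(x) > 0 for all x, let p̄ : ℝ^n → [0, ∞) be measurable with Z := ∫ p̄ < ∞, and let T : ℝ^n × ℝ^n → [0, ∞) be a measurable transition density (∫ T(x′|x) dx′ = 1 for every x) satisfying the detailed-balance relation T(x′|x) π̄₁(x) = T(x|x′) π̄₁(x′) for all x, x′. Then ∬ q(x) T(x′|x) · (π̄₁(x)/q(x)) · (p̄(x′)/π̄₁(x′)) dx′ dx = Z. -/

import Mathlib

open MeasureTheory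

/-- Unbiasedness of the AIS weight with a single bridging density: if `T (x', x)` is a
transition density satisfying detailed balance with respect to the positive unnormalized
bridging density `π̄₁`, then the expected importance weight
`(π̄₁(x)/q(x)) · (p̄(x′)/π̄₁(x′))` under `x ∼ q`, `x′ ∼ T(·|x)` equals the normalizing
constant `Z = ∫ p̄` of the unnormalized target `p̄`. -/
theorem ais_one_step_unbiased
    {n : ℕ} (q pibar pbar : (Fin n → ℝ) → ℝ)
    (T : (Fin n → ℝ) × (Fin n → ℝ) → ℝ)
    (hq_meas : Measurable q) (hq_pos : ∀ x, 0 < q x)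
    (hq_int : ∫ x, q x = 1)
    (hpi_meas : Measurable pibar) (hpi_pos : ∀ x, 0 < pibar x)
    (hp_meas : Measurable pbar) (hp_nonneg : ∀ x, 0 ≤ pbar x)
    (hp_integrable : Integrable pbar)
    (hT_meas : Measurable T) (hT_nonneg : ∀ x' x, 0 ≤ T (x', x))
    (hT_int : ∀ x, ∫ x', T (x', x) = 1)
    (hT_db : ∀ x x', T (x', x) * pibar x = T (x, x') * pibar x') :
    ∫ x, ∫ x', q x * T (x', x) * (pibar x / q x) * (pbar x' / pibar x') =
      ∫ x, pbar x := by
  have hpt : ∀ x x', q x * T (x', x) * (pibar x / q x) * (pbar x' / pibar x')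
      = T (x, x') * pbar x' := by
    intro x x'
    have h1 := (hq_pos x).ne'
    have h2 := (hpi_pos x').ne'
    have h3 := hT_db x x'
    calc q x * T (x', x) * (pibar x / q x) * (pbar x' / pibar x')
        = (T (x', x) * pibar x) * (pbar x' / pibar x') := by field_simp
      _ = (T (x, x') * pibar x') * (pbar x' / pibar x') := by rw [h3]
      _ = T (x, x') * pbar x' := by field_simp
  simp_rw [hpt]
  have hTi : ∀ x', Integrable (fun x => T (x, x')) := by
    intro x'
    by_contra h
    have h1 := hT_int x'
    rw [integral_undef h] at h1
    exact zero_ne_one h1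
  have hint : Integrable (Function.uncurry fun x x' => T (x, x') * pbar x')
      ((volume : Measure (Fin n → ℝ)).prod volume) := by
    have hm : Measurable (Function.uncurry fun x x' => T (x, x') * pbar x') :=
      hT_meas.mul (hp_meas.comp measurable_snd)
    rw [integrable_prod_iff' hm.aestronglyMeasurable]
    refine ⟨Filter.Eventually.of_forall fun x' => (hTi x').mul_const (pbar x'), ?_⟩
    have : (fun y => ∫ x, ‖Function.uncurry (fun x x' => T (x, x') * pbar x') (x, y)‖) = pbar := by
      funext y
      have h : ∀ x, ‖Function.uncurry (fun x x' => T (x, x') * pbar x') (x, y)‖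
          = T (x, y) * pbar y := fun x =>
        Real.norm_of_nonneg (mul_nonneg (hT_nonneg _ _) (hp_nonneg _))
      simp_rw [h]
      rw [integral_mul_const, hT_int, one_mul]
    rw [this]
    exact hp_integrable
  rw [integral_integral_swap hint]
  simp_rw [integral_mul_const, hT_int, one_mul]
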